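/- arXiv:1602.02408 — 2 statements merged into one kernel-verified Lean document; each statement's English description precedes it below -/
import Mathlib

section
/- For nonempty compact intervals A and B in ℝ, there exists a nonempty compact interval C with A = B + C (Minkowski sum), i.e., the Hukuhara difference A −_H B exists, if and only if spr B ≤ spr A. -/
open Pointwise

theorem Icc_add_Icc {α : Type*} [AddGroup α] [Lattice α] [AddLeftMono α] [AddRightMono α]
    {b₁ b₂ c₁ c₂ : α} (hb : b₁ ≤ b₂) (hc : c₁ ≤ c₂) :
    Set.Icc b₁ b₂ + Set.Icc c₁ c₂ = Set.Icc (b₁ + c₁) (b₂ + c₂) := by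
  refine (Set.Icc_add_Icc_subset b₁ b₂ c₁ c₂).antisymm fun x ⟨hx₁, hx₂⟩ ↦ ?_
  -- Split `x = b + (-b + x)` with `b` the largest element satisfying `b ≤ b₂` and `b + c₁ ≤ x`.
  let b := b₂ ⊓ (x - c₁)
  have remainder_eq : -b + x = (-b₂ + x) ⊔ c₁ := by
    simp only [b, neg_inf, sup_add, neg_sub, sub_add_cancel]
  have hb_mem : b ∈ Set.Icc b₁ b₂ :=
    ⟨le_inf hb (le_sub_iff_add_le.mpr hx₁), inf_le_left⟩
  have remainder_mem : -b + x ∈ Set.Icc c₁ c₂ :=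
    remainder_eq ▸ ⟨le_sup_right, sup_le (neg_add_le_iff_le_add.mpr hx₂) hc⟩
  exact Set.mem_add.mpr ⟨b, hb_mem, -b + x, remainder_mem, add_neg_cancel_left b x⟩

section LatticeOrderedGroup

variable {α : Type*} [AddCommGroup α] [Lattice α] [IsOrderedAddMonoid α] {a₁ a₂ b₁ b₂ : α}

theorem Icc_eq_Icc_add_Icc_iff {c₁ c₂ : α} (hb : b₁ ≤ b₂) (hc : c₁ ≤ c₂) :
    Set.Icc a₁ a₂ = Set.Icc b₁ b₂ + Set.Icc c₁ c₂ ↔ c₁ = a₁ - b₁ ∧ c₂ = a₂ - b₂ := by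
  rw [Icc_add_Icc hb hc, eq_comm, Set.Icc_eq_Icc_iff (add_le_add hb hc),
    eq_sub_iff_add_eq', eq_sub_iff_add_eq']

theorem hukuhara_difference_exists_iff_general (hb : b₁ ≤ b₂) :
    (∃ c₁ c₂ : α, c₁ ≤ c₂ ∧ Set.Icc a₁ a₂ = Set.Icc b₁ b₂ + Set.Icc c₁ c₂) ↔
      b₂ - b₁ ≤ a₂ - a₁ := by
  have endpoints_le_iff : a₁ - b₁ ≤ a₂ - b₂ ↔ b₂ - b₁ ≤ a₂ - a₁ := by
    rw [← sub_nonneg, sub_sub_sub_comm, sub_nonneg]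
  rw [← endpoints_le_iff]
  constructor
  · rintro ⟨c₁, c₂, hc, h⟩
    obtain ⟨rfl, rfl⟩ := (Icc_eq_Icc_add_Icc_iff hb hc).mp h
    exact hc
  · intro hc
    exact ⟨a₁ - b₁, a₂ - b₂, hc, (Icc_eq_Icc_add_Icc_iff hb hc).mpr ⟨rfl, rfl⟩⟩

end LatticeOrderedGroup

/-- Existence of the Hukuhara difference: for nonempty compact intervals
`A = [a₁,a₂]` and `B = [b₁,b₂]`, there is a nonempty compact interval `C` with
`A = B + C` (Minkowski sum) iff `spr B ≤ spr A`. -/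
theorem hukuhara_difference_exists_iff (a₁ a₂ b₁ b₂ : ℝ) (ha : a₁ ≤ a₂) (hb : b₁ ≤ b₂) :
    (∃ c₁ c₂ : ℝ, c₁ ≤ c₂ ∧ Set.Icc a₁ a₂ = Set.Icc b₁ b₂ + Set.Icc c₁ c₂) ↔
      (b₂ - b₁) / 2 ≤ (a₂ - a₁) / 2 := by
  rw [hukuhara_difference_exists_iff_general hb, div_le_div_iff_of_pos_right two_pos]
end

section
/- Let k ∈ ℕ, let m_i ∈ ℝ and s_i ≥ 0 for i = 1,…,k, let b₁, b₂, b₃, b₄ ∈ ℝ^k, and let E be a nonempty compact interval in ℝ. Define the nonempty compact interval Y as the Minkowski sum Y = Σᵢ b₁ᵢ•{m_i} + Σᵢ b₂ᵢ•(s_i•[−1,1]) + Σᵢ b₃ᵢ•(m_i•[−1,1]) + Σᵢ b₄ᵢ•{s_i} + E. Then mid Y = Σᵢ b₁ᵢ m_i + Σᵢ b₄ᵢ s_i + mid E and spr Y = Σᵢ |b₂ᵢ| s_i + Σᵢ |b₃ᵢ| |m_i| + spr E. -/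
open Pointwise

/-! Intervals `[c - r, c + r]` add by adding both mids and spreads, while scaling by `b` multiplies
the mid by `b` and the spread by `|b|`. Each summand of the model is a multiple of such an interval:
a singleton has spread `0`, and `[-1, 1]` has mid `0` and spread `1`. -/

/-- The compact interval with midpoint `c` and spread `r`, which describes an interval by the two
quantities that the regression model separates. It is empty when `r < 0`. -/
def midSprInterval {α : Type*} [AddGroup α] [Preorder α] (c r : α) : Set α :=
  Set.Icc (c - r) (c + r)

section AddGroup

variable {α : Type*}

theorem midSprInterval_zero_right [AddGroup α] [PartialOrder α] (c : α) :
    midSprInterval c 0 = {c} := by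
  simp [midSprInterval]

theorem neg_midSprInterval [AddCommGroup α] [PartialOrder α] [IsOrderedAddMonoid α] (c r : α) :
    -midSprInterval c r = midSprInterval (-c) r := by
  rw [midSprInterval, midSprInterval, Set.neg_Icc, neg_add', neg_sub', sub_neg_eq_add]

variable [AddCommGroup α] [LinearOrder α] [IsOrderedAddMonoid α]

theorem midSprInterval_add_midSprInterval {c d r t : α} (hr : 0 ≤ r) (ht : 0 ≤ t) :
    midSprInterval c r + midSprInterval d t = midSprInterval (c + d) (r + t) := by
  have sub_le_add {x y : α} (hy : 0 ≤ y) : x - y ≤ x + y :=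
    (sub_le_self x hy).trans (le_add_of_nonneg_right hy)
  simp only [midSprInterval]
  rw [Set.Icc_add_Icc (sub_le_add hr) (sub_le_add ht), sub_add_sub_comm, add_add_add_comm]

theorem sum_midSprInterval {ι : Type*} (t : Finset ι) (c : ι → α) {r : ι → α}
    (hr : ∀ i ∈ t, 0 ≤ r i) :
    ∑ i ∈ t, midSprInterval (c i) (r i) = midSprInterval (∑ i ∈ t, c i) (∑ i ∈ t, r i) := by
  induction t using Finset.cons_induction with
  | empty => simp [midSprInterval_zero_right, Set.singleton_zero]
  | cons a t ha ih =>
    have hr_head : 0 ≤ r a := hr a (Finset.mem_cons_self a t)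
    have hr_tail : ∀ i ∈ t, 0 ≤ r i := fun i hi => hr i (Finset.mem_cons_of_mem hi)
    simp only [Finset.sum_cons]
    rw [ih hr_tail, midSprInterval_add_midSprInterval hr_head (Finset.sum_nonneg hr_tail)]

end AddGroup

section Field

variable {K : Type*} [Field K] [LinearOrder K] [IsStrictOrderedRing K]

theorem Icc_eq_midSprInterval (a b : K) :
    Set.Icc a b = midSprInterval ((a + b) / 2) ((b - a) / 2) := by
  rw [midSprInterval]
  congr 1 <;> ring

theorem smul_midSprInterval_of_nonneg {b : K} (hb : 0 ≤ b) (c : K) {r : K} (hr : 0 ≤ r) :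
    b • midSprInterval c r = midSprInterval (b * c) (b * r) := by
  have hle : c - r ≤ c + r := by linarith
  calc
    b • midSprInterval c r = Set.Icc (b * (c - r)) (b * (c + r)) := Set.image_mul_left_Icc hb hle
    _ = midSprInterval (b * c) (b * r) := by rw [mul_sub, mul_add, midSprInterval]

theorem smul_midSprInterval (b c : K) {r : K} (hr : 0 ≤ r) :
    b • midSprInterval c r = midSprInterval (b * c) (|b| * r) := by
  rcases le_total 0 b with hb | hb
  · rw [smul_midSprInterval_of_nonneg hb c hr, abs_of_nonneg hb]
  · calc
      b • midSprInterval c r = -(-b • midSprInterval c r) := by rw [Set.neg_smul_set, neg_neg]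
      _ = -midSprInterval (-b * c) (-b * r) := by
        rw [smul_midSprInterval_of_nonneg (neg_nonneg.2 hb) c hr]
      _ = midSprInterval (b * c) (|b| * r) := by
        rw [neg_midSprInterval, neg_mul, neg_neg, abs_of_nonpos hb]

theorem sum_smul_midSprInterval {ι : Type*} (t : Finset ι) (b c : ι → K) {r : ι → K}
    (hr : ∀ i ∈ t, 0 ≤ r i) :
    ∑ i ∈ t, b i • midSprInterval (c i) (r i) =
      midSprInterval (∑ i ∈ t, b i * c i) (∑ i ∈ t, |b i| * r i) := by
  rw [Finset.sum_congr rfl fun i hi => smul_midSprInterval (b i) (c i) (hr i hi),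
    sum_midSprInterval t _ fun i hi => mul_nonneg (abs_nonneg _) (hr i hi)]

theorem smul_Icc_neg_one_one (x : K) :
    x • Set.Icc (-1 : K) 1 = midSprInterval 0 |x| := by
  have Icc_eq : Set.Icc (-1 : K) 1 = midSprInterval 0 1 := by simp [midSprInterval]
  rw [Icc_eq, smul_midSprInterval x 0 zero_le_one, mul_zero, mul_one]

theorem sum_smul_smul_Icc_neg_one_one {ι : Type*} (t : Finset ι) (b x : ι → K) :
    ∑ i ∈ t, b i • (x i • Set.Icc (-1 : K) 1) = midSprInterval 0 (∑ i ∈ t, |b i| * |x i|) := by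
  simp only [smul_Icc_neg_one_one]
  simpa using sum_smul_midSprInterval t b 0 (r := fun i => |x i|) fun i _ => abs_nonneg (x i)

theorem interval_regression_mid_spr_general {ι : Type*} [Fintype ι] (m s b₁ b₂ b₃ b₄ : ι → K)
    (hs : ∀ i, 0 ≤ s i) {e₁ e₂ : K} (he : e₁ ≤ e₂) :
    (∑ i, b₁ i • ({m i} : Set K)) + (∑ i, b₂ i • (s i • Set.Icc (-1 : K) 1)) +
        (∑ i, b₃ i • (m i • Set.Icc (-1 : K) 1)) + (∑ i, b₄ i • ({s i} : Set K)) +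
        Set.Icc e₁ e₂ =
      midSprInterval (∑ i, b₁ i * m i + ∑ i, b₄ i * s i + (e₁ + e₂) / 2)
        (∑ i, |b₂ i| * s i + ∑ i, |b₃ i| * |m i| + (e₂ - e₁) / 2) := by
  have abs_s (i : ι) : |s i| = s i := abs_of_nonneg (hs i)
  have spr₂ : 0 ≤ ∑ i, |b₂ i| * s i :=
    Finset.sum_nonneg fun i _ => mul_nonneg (abs_nonneg _) (hs i)
  have spr₃ : 0 ≤ ∑ i, |b₃ i| * |m i| :=
    Finset.sum_nonneg fun i _ => mul_nonneg (abs_nonneg _) (abs_nonneg _)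
  have sprE : 0 ≤ (e₂ - e₁) / 2 := div_nonneg (sub_nonneg.2 he) zero_le_two
  calc
    _ = midSprInterval (∑ i, b₁ i * m i) 0 + midSprInterval 0 (∑ i, |b₂ i| * s i) +
          midSprInterval 0 (∑ i, |b₃ i| * |m i|) + midSprInterval (∑ i, b₄ i * s i) 0 +
          midSprInterval ((e₁ + e₂) / 2) ((e₂ - e₁) / 2) := by
      simp only [Set.smul_set_singleton, Set.finsetSum_singleton, smul_eq_mul,
        sum_smul_smul_Icc_neg_one_one, abs_s, midSprInterval_zero_right, Icc_eq_midSprInterval e₁]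
    _ = _ := by
      rw [midSprInterval_add_midSprInterval le_rfl spr₂,
        midSprInterval_add_midSprInterval (by positivity) spr₃,
        midSprInterval_add_midSprInterval (by positivity) le_rfl,
        midSprInterval_add_midSprInterval (by positivity) sprE]
      simp only [zero_add, add_zero]

end Field

/-- Mid/spread decomposition of the interval regression model: if
`Y = Σᵢ b₁ᵢ•{mᵢ} + Σᵢ b₂ᵢ•(sᵢ•[−1,1]) + Σᵢ b₃ᵢ•(mᵢ•[−1,1]) + Σᵢ b₄ᵢ•{sᵢ} + E`
(Minkowski sums), then `mid Y = Σᵢ b₁ᵢ mᵢ + Σᵢ b₄ᵢ sᵢ + mid E` and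
`spr Y = Σᵢ |b₂ᵢ| sᵢ + Σᵢ |b₃ᵢ| |mᵢ| + spr E`, i.e. `Y` is the compact interval
`[mid Y − spr Y, mid Y + spr Y]`. -/
theorem interval_regression_mid_spr (k : ℕ) (m s b₁ b₂ b₃ b₄ : Fin k → ℝ)
    (hs : ∀ i, 0 ≤ s i) (e₁ e₂ : ℝ) (he : e₁ ≤ e₂) :
    (∑ i, b₁ i • ({m i} : Set ℝ)) + (∑ i, b₂ i • (s i • Set.Icc (-1 : ℝ) 1)) +
        (∑ i, b₃ i • (m i • Set.Icc (-1 : ℝ) 1)) + (∑ i, b₄ i • ({s i} : Set ℝ)) +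
        Set.Icc e₁ e₂ =
      Set.Icc
        ((∑ i, b₁ i * m i + ∑ i, b₄ i * s i + (e₁ + e₂) / 2) -
          (∑ i, |b₂ i| * s i + ∑ i, |b₃ i| * |m i| + (e₂ - e₁) / 2))
        ((∑ i, b₁ i * m i + ∑ i, b₄ i * s i + (e₁ + e₂) / 2) +
          (∑ i, |b₂ i| * s i + ∑ i, |b₃ i| * |m i| + (e₂ - e₁) / 2)) :=
  interval_regression_mid_spr_general m s b₁ b₂ b₃ b₄ hs he
end
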